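/- arXiv:1503.08845 — 2 statements merged into one kernel-verified Lean document; each statement's English description precedes it below -/
import Mathlib

section
/- Let S ∈ ℝ^{3×3} be skew-symmetric, let T ∈ ℝ^{3×3} be arbitrary, and let R0 ∈ SO(3). Then there exist ε > 0 and C > 0 such that for every real t with |t| < ε there are a symmetric matrix M(t) ∈ ℝ^{3×3} with ‖M(t)‖ ≤ C and a rotation R(t) ∈ SO(3) such that (Id₃ + tS + t²T) R0 = (Id₃ + t² M(t)) R(t). -/
noncomputable section

open scoped Topology ENNReal
open Filter MeasureTheory

/-- Points of the midplate `Ω ⊆ ℝ²`. -/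
abbrev E2 : Type := Fin 2 → ℝ
/-- Vectors in `ℝ³`. -/
abbrev V3 : Type := Fin 3 → ℝ
/-- `3×3` real arrays. -/
abbrev M3 : Type := Fin 3 → Fin 3 → ℝ
/-- `2×2` real arrays. -/
abbrev M2 : Type := Fin 2 → Fin 2 → ℝ

/-- Partial derivative `∂ᵢ` of a scalar field on `ℝ²`. -/
def pd2 (i : Fin 2) (f : E2 → ℝ) (x : E2) : ℝ := fderiv ℝ f x (Pi.single i 1)

/-- Partial derivative `∂ᵢ` of an `ℝ³`-valued field on `ℝ²`. -/
def pdv (i : Fin 2) (f : E2 → V3) (x : E2) : V3 := fderiv ℝ f x (Pi.single i 1)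

/-- Euclidean inner product on `ℝ³`. -/
def dot3 (u v : V3) : ℝ := ∑ k, u k * v k

/-- Matrix product of `3×3` arrays. -/
def mmul (A B : M3) : M3 := fun i j => ∑ k, A i k * B k j

/-- Transpose of a `3×3` array. -/
def transp (A : M3) : M3 := fun i j => A j i

/-- The identity `3×3` array. -/
def idm : M3 := fun i j => if i = j then 1 else 0

/-- Frobenius norm of a `3×3` array. -/
def fnorm (A : M3) : ℝ := Real.sqrt (∑ i, ∑ j, (A i j) ^ 2)

/-- Symmetry of a `3×3` array. -/
def SymM (A : M3) : Prop := ∀ i j, A i j = A j i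

/-- Positive definiteness of a `3×3` array. -/
def PosDefM (A : M3) : Prop := ∀ v : V3, v ≠ 0 → 0 < ∑ i, ∑ j, v i * A i j * v j

/-- The special orthogonal group `SO(3)`. -/
def SO3 : Set M3 := {R | mmul (transp R) R = idm ∧ (Matrix.of R).det = 1}

/-- Entries of the inverse of a `3×3` array. -/
def minv (A : M3) : M3 := fun i j => (Matrix.of A)⁻¹ i j

/-- The columns `∂₁y₀, ∂₂y₀, b₀` of the matrix `Q₀`. -/
def Qcol (y0 b0 : E2 → V3) (x : E2) : Fin 3 → V3 := ![pdv 0 y0 x, pdv 1 y0 x, b0 x]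

/-- The determinant of `Q₀`. -/
def Qdet (y0 b0 : E2 → V3) (x : E2) : ℝ := (Matrix.of fun a j => Qcol y0 b0 x j a).det

/-- Partial derivatives `∂₁, ∂₂, ∂₃` of an `x₃`-independent scalar field (so `∂₃ = 0`). -/
def pd3 (k : Fin 3) (f : E2 → ℝ) (x : E2) : ℝ :=
  if h : (k : ℕ) < 2 then pd2 ⟨(k : ℕ), h⟩ f x else 0

/-- Christoffel symbols `Γ^n_{kl}` of the (`x₃`-independent) metric `G`. -/
def Gamma (G : E2 → M3) (n k l : Fin 3) (x : E2) : ℝ :=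
  (1 / 2) * ∑ s, minv (G x) n s *
    (pd3 k (fun y => G y s l) x + pd3 l (fun y => G y s k) x - pd3 s (fun y => G y k l) x)

/-- Covariant Riemann curvatures `R_{iklm}` of the (`x₃`-independent) metric `G`;
indices are `0`-based, so e.g. `R_{1313} = Riem G 0 2 0 2`. -/
def Riem (G : E2 → M3) (i k l m : Fin 3) (x : E2) : ℝ :=
  (1 / 2) * (pd3 k (fun y => pd3 l (fun z => G z i m) y) x
           + pd3 i (fun y => pd3 m (fun z => G z k l) y) x
           - pd3 k (fun y => pd3 m (fun z => G z i l) y) x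
           - pd3 i (fun y => pd3 l (fun z => G z k m) y) x)
    + ∑ n, ∑ p, G x n p *
        (Gamma G n k l x * Gamma G p i m x - Gamma G n k m x * Gamma G p i l x)

/-- The deformation gradient `∇u = [∂₁u | ∂₂u | ∂₃u]` of `u : Ω^h → ℝ³`. -/
def gradu (u : E2 × ℝ → V3) (x : E2 × ℝ) : M3 :=
  fun a j => ![fderiv ℝ u x (Pi.single 0 1, 0),
               fderiv ℝ u x (Pi.single 1 1, 0),
               fderiv ℝ u x (0, 1)] j a

/-- The elastic energy `E^h(u) = (1/h) ∫_{Ω × (-h/2,h/2)} W(∇u A⁻¹)`. -/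
def Eh (W : M3 → ℝ≥0∞) (A : E2 → M3) (Ω : Set E2) (h : ℝ) (u : E2 × ℝ → V3) : ℝ≥0∞ :=
  (ENNReal.ofReal h)⁻¹ *
    ∫⁻ x in Ω ×ˢ Set.Ioo (-(h / 2)) (h / 2), W (mmul (gradu u x) (minv (A x.1)))

/-- Symmetric part of a `3×3` array. -/
def symM (A : M3) : M3 := fun i j => (A i j + A j i) / 2
/-- Symmetric part of a `2×2` array. -/
def sym2M (A : M2) : M2 := fun i j => (A i j + A j i) / 2
/-- `F₂*`: the `3×3` array with principal `2×2` minor `F₂` and all other entries `0`. -/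
def put (F2 : M2) : M3 :=
  fun i j => if h : (i : ℕ) < 2 ∧ (j : ℕ) < 2 then F2 ⟨i, h.1⟩ ⟨j, h.2⟩ else 0
/-- The tensor product `c ⊗ e₃`. -/
def tene3 (c : V3) : M3 := fun i j => if j = 2 then c i else 0
/-- Cross product in `ℝ³`. -/
def cross (u v : V3) : V3 :=
  ![u 1 * v 2 - u 2 * v 1, u 2 * v 0 - u 0 * v 2, u 0 * v 1 - u 1 * v 0]
/-- The quadratic form `Q₃(F) = D²W(Id₃)(F,F)`, for a density `w`. -/
def Q3d (w : M3 → ℝ) (F : M3) : ℝ := fderiv ℝ (fun P => fderiv ℝ w P F) idm F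
/-- The reduced quadratic form `Q_{2,A}(x', F₂)`:
the infimum of `Q₃(A⁻¹ F̃ A⁻¹)` over all `F̃` whose principal `2×2` minor is `F₂`. -/
def QA (w : M3 → ℝ) (A : E2 → M3) (x : E2) (F2 : M2) : ℝ :=
  ⨅ Ft : {Ft : M3 // ∀ i j : Fin 2, Ft i.castSucc j.castSucc = F2 i j},
    Q3d w (mmul (minv (A x)) (mmul Ft.1 (minv (A x))))

/-!
Put `F = 1 + t S + t² T`. Skew-symmetry of `S` kills the first-order term of `F Fᵀ`, so that
`‖F Fᵀ - 1‖ ≤ C t²` for `|t| ≤ 1`. For small `t` the determinant of `F` is positive, and the polar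
decomposition `F = P Q` has `P = √(F Fᵀ)` positive definite and `Q` a rotation. Since
`P² - 1 = (1 + P) (P - 1)` and multiplication by `1 + P` does not decrease the Frobenius norm,
`‖P - 1‖ ≤ ‖P² - 1‖ ≤ C t²`; hence `M = (P - 1) / t²` is symmetric with `‖M‖ ≤ C`, and
`F R₀ = (1 + t² M) (Q R₀)`.
-/

section PolarDecomposition

open scoped Matrix ComplexOrder

variable {n 𝕜 : Type*} [Fintype n] [DecidableEq n] [RCLike 𝕜]

lemma exists_posDef_mul_mem_unitaryGroup {F : Matrix n n 𝕜} (hF : IsUnit F) :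
    ∃ P Q : Matrix n n 𝕜,
      P.PosDef ∧ P * P = F * Fᴴ ∧ Q ∈ Matrix.unitaryGroup n 𝕜 ∧ F = P * Q := by
  open scoped MatrixOrder in
  set P := CFC.abs Fᴴ
  have hPP : P * P = F * Fᴴ := by
    simpa only [Matrix.star_eq_conjTranspose, Matrix.conjTranspose_conjTranspose]
      using CFC.abs_mul_abs Fᴴ
  have hPunit : IsUnit P := isUnit_of_mul_isUnit_left (hPP ▸ hF.mul hF.star)
  have hP : P.PosDef :=
    (Matrix.nonneg_iff_posSemidef.mp (CFC.abs_nonneg Fᴴ)).posDef_iff_isUnit.mpr hPunit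
  have hPdet : IsUnit P.det := (Matrix.isUnit_iff_isUnit_det P).mp hPunit
  refine ⟨P, P⁻¹ * F, hP, hPP, ?_, (Matrix.mul_nonsing_inv_cancel_left _ _ hPdet).symm⟩
  rw [Matrix.mem_unitaryGroup_iff]
  calc P⁻¹ * F * star (P⁻¹ * F) = P⁻¹ * (F * Fᴴ) * P⁻¹ := by
        rw [star_mul, Matrix.star_eq_conjTranspose P⁻¹, hP.isHermitian.inv.eq, mul_assoc, mul_assoc,
          mul_assoc, Matrix.star_eq_conjTranspose]
    _ = 1 := by
        rw [← hPP, Matrix.nonsing_inv_mul_cancel_left _ _ hPdet, Matrix.mul_nonsing_inv _ hPdet]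

lemma mem_specialUnitaryGroup_of_det_pos {U : Matrix n n 𝕜} (hU : U ∈ Matrix.unitaryGroup n 𝕜)
    (hdet : 0 < U.det) : U ∈ Matrix.specialUnitaryGroup n 𝕜 := by
  have hsq : U.det ^ 2 = 1 := by
    rw [sq]
    simpa only [(IsSelfAdjoint.of_nonneg hdet.le).star_eq] using
      Unitary.star_mul_self_of_mem (Matrix.det_of_mem_unitary hU)
  refine Matrix.mem_specialUnitaryGroup_iff.mpr ⟨hU, ?_⟩
  exact (sq_eq_one_iff.mp hsq).resolve_right fun h =>
    lt_asymm hdet (h ▸ neg_lt_zero.mpr one_pos)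

lemma exists_posDef_mul_mem_specialUnitaryGroup {F : Matrix n n 𝕜} (hF : 0 < F.det) :
    ∃ P Q : Matrix n n 𝕜,
      P.PosDef ∧ P * P = F * Fᴴ ∧ Q ∈ Matrix.specialUnitaryGroup n 𝕜 ∧ F = P * Q := by
  obtain ⟨P, Q, hP, hPP, hQ, rfl⟩ :=
    exists_posDef_mul_mem_unitaryGroup ((Matrix.isUnit_iff_isUnit_det F).mpr hF.ne'.isUnit)
  have hdet : 0 < Q.det := by
    rw [Matrix.det_mul] at hF
    exact (mul_pos_iff_of_pos_left hP.det_pos).mp hF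
  exact ⟨P, Q, hP, hPP, mem_specialUnitaryGroup_of_det_pos hQ hdet, rfl⟩

end PolarDecomposition

section FrobeniusNorm

open scoped Matrix ComplexOrder Matrix.Norms.Frobenius

variable {m n 𝕜 : Type*} [Fintype m] [Fintype n]

lemma frobenius_norm_eq_sqrt {α : Type*} [SeminormedAddCommGroup α] (A : Matrix m n α) :
    ‖A‖ = √(∑ i, ∑ j, ‖A i j‖ ^ 2) := by
  simp only [Matrix.frobenius_norm_def, Real.sqrt_eq_rpow, Real.rpow_two]

variable [RCLike 𝕜]

lemma frobenius_norm_sq_eq_re_trace (A : Matrix m n 𝕜) : ‖A‖ ^ 2 = RCLike.re (Aᴴ * A).trace := by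
  rw [frobenius_norm_eq_sqrt, Real.sq_sqrt (by positivity), Finset.sum_comm]
  simp only [Matrix.trace, Matrix.diag_apply, Matrix.mul_apply, Matrix.conjTranspose_apply,
    RCLike.star_def, RCLike.conj_mul, map_sum, ← RCLike.ofReal_pow, RCLike.ofReal_re]

variable [DecidableEq m]

lemma frobenius_norm_le_one_add_mul {P : Matrix m m 𝕜} (hP : P.PosSemidef) (A : Matrix m n 𝕜) :
    ‖A‖ ≤ ‖(1 + P) * A‖ := by
  have hcross : 0 ≤ RCLike.re (Aᴴ * P * A).trace :=
    (RCLike.nonneg_iff.mp (hP.conjTranspose_mul_mul_same A).trace_nonneg).1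
  have hexpand : ((1 + P) * A)ᴴ * ((1 + P) * A) =
      Aᴴ * A + (2 : ℝ) • (Aᴴ * P * A) + (P * A)ᴴ * (P * A) := by
    simp only [Matrix.conjTranspose_mul, Matrix.conjTranspose_add, hP.isHermitian.eq,
      Matrix.mul_add, Matrix.add_mul, Matrix.one_mul, Matrix.mul_assoc, two_smul]
    abel
  refine le_of_sq_le_sq ?_ (norm_nonneg _)
  calc ‖A‖ ^ 2 ≤ ‖A‖ ^ 2 + 2 * RCLike.re (Aᴴ * P * A).trace + ‖P * A‖ ^ 2 := by
        linarith [sq_nonneg ‖P * A‖]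
    _ = ‖(1 + P) * A‖ ^ 2 := by
        simp only [frobenius_norm_sq_eq_re_trace, hexpand, Matrix.trace_add, Matrix.trace_smul,
          map_add, RCLike.smul_re]

lemma frobenius_norm_sub_one_le {P : Matrix m m 𝕜} (hP : P.PosSemidef) :
    ‖P - 1‖ ≤ ‖P * P - 1‖ :=
  (frobenius_norm_le_one_add_mul hP (P - 1)).trans_eq (congrArg _ (by noncomm_ring))

end FrobeniusNorm

section SkewPerturbation

lemma mul_star_one_add_smul_skewAdjoint {R A : Type*} [CommRing R] [StarRing R] [TrivialStar R]
    [Ring A] [StarRing A] [Algebra R A] [StarModule R A] {S : A} (hS : S ∈ skewAdjoint A) (T : A)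
    (t : R) :
    (1 + t • S + t ^ 2 • T) * star (1 + t • S + t ^ 2 • T) =
      1 + t ^ 2 • (T + star T - S * S + t • (S * star T - T * S) + t ^ 2 • (T * star T)) := by
  simp only [star_add, star_smul, star_one, star_trivial, skewAdjoint.mem_iff.mp hS, add_mul,
    mul_add, smul_mul_assoc, mul_smul_comm, one_mul, mul_one, mul_neg]
  module

variable {A : Type*} [SeminormedRing A] [StarRing A] [NormedStarGroup A] [NormedAlgebra ℝ A]
  [StarModule ℝ A]

lemma norm_mul_star_sub_one_le_of_mem_skewAdjoint {S : A} (hS : S ∈ skewAdjoint A) (T : A)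
    {t : ℝ} (ht : |t| ≤ 1) :
    ‖(1 + t • S + t ^ 2 • T) * star (1 + t • S + t ^ 2 • T) - 1‖ ≤
      t ^ 2 * (2 * ‖T‖ + (‖S‖ + ‖T‖) ^ 2) := by
  have ht2 : |t ^ 2| ≤ 1 := by rw [abs_pow]; exact pow_le_one₀ (abs_nonneg t) ht
  rw [mul_star_one_add_smul_skewAdjoint hS, add_sub_cancel_left, norm_smul, Real.norm_eq_abs,
    abs_sq]
  gcongr
  calc ‖T + star T - S * S + t • (S * star T - T * S) + t ^ 2 • (T * star T)‖
      ≤ ‖T‖ + ‖star T‖ + ‖S * S‖ + |t| * (‖S * star T‖ + ‖T * S‖) + |t ^ 2| * ‖T * star T‖ := by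
        refine (norm_add₃_le).trans ?_
        rw [norm_smul, norm_smul, Real.norm_eq_abs, Real.norm_eq_abs]
        gcongr
        · exact (norm_sub_le _ _).trans (add_le_add_left (norm_add_le _ _) _)
        · exact norm_sub_le _ _
    _ ≤ ‖T‖ + ‖star T‖ + ‖S‖ * ‖S‖ + 1 * (‖S‖ * ‖star T‖ + ‖T‖ * ‖S‖) + 1 * (‖T‖ * ‖star T‖) := by
        gcongr <;> exact norm_mul_le _ _
    _ = 2 * ‖T‖ + (‖S‖ + ‖T‖) ^ 2 := by
        rw [norm_star]
        ring

end SkewPerturbation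

lemma norm_inv_smul_le_and_smul_inv_smul_eq {𝕜 E : Type*} [NormedDivisionRing 𝕜]
    [NormedAddCommGroup E] [Module 𝕜 E] [NormSMulClass 𝕜 E] {c : 𝕜} {C : ℝ} (hC : 0 ≤ C) {x : E}
    (hx : ‖x‖ ≤ ‖c‖ * C) : ‖c⁻¹ • x‖ ≤ C ∧ c • c⁻¹ • x = x := by
  rcases eq_or_ne c 0 with rfl | hc
  · have hx0 : x = 0 := by simpa using hx
    simp [hx0, hC]
  · refine ⟨?_, smul_inv_smul₀ hc x⟩
    rwa [norm_smul, norm_inv, inv_mul_le_iff₀ (norm_pos_iff.mpr hc)]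

section SymmetricRotationFactorization

open scoped Matrix Matrix.Norms.Frobenius

lemma eventually_det_one_add_smul_pos {n : Type*} [Fintype n] [DecidableEq n]
    (S T : Matrix n n ℝ) : ∀ᶠ t : ℝ in 𝓝 0, 0 < (1 + t • S + t ^ 2 • T).det := by
  have hcont : Continuous fun t : ℝ => (1 + t • S + t ^ 2 • T).det := by fun_prop
  exact hcont.continuousAt.eventually_const_lt (by simp)

theorem stmt4_general {n : Type*} [Fintype n] [DecidableEq n] {S : Matrix n n ℝ} (hS : Sᵀ = -S)
    (T : Matrix n n ℝ) {R₀ : Matrix n n ℝ} (hR₀ : R₀ ∈ Matrix.specialOrthogonalGroup n ℝ) :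
    ∃ ε > (0 : ℝ), ∃ C > (0 : ℝ), ∀ t : ℝ, |t| < ε →
      ∃ M R : Matrix n n ℝ, M.IsSymm ∧ ‖M‖ ≤ C ∧ R ∈ Matrix.specialOrthogonalGroup n ℝ ∧
        (1 + t • S + t ^ 2 • T) * R₀ = (1 + t ^ 2 • M) * R := by
  obtain ⟨ε, hε, hdet⟩ := Metric.eventually_nhds_iff.mp (eventually_det_one_add_smul_pos S T)
  set C := 2 * ‖T‖ + (‖S‖ + ‖T‖) ^ 2
  have hC : 0 ≤ C := by positivity
  refine ⟨min ε 1, lt_min hε one_pos, C + 1, by positivity, fun t ht => ?_⟩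
  obtain ⟨htε, ht1⟩ := lt_min_iff.mp ht
  obtain ⟨P, Q, hP, hPP, hQ, hF⟩ :=
    exists_posDef_mul_mem_specialUnitaryGroup (hdet (by simpa using htε))
  have hP1 : ‖P - 1‖ ≤ ‖t ^ 2‖ * C := by
    rw [Real.norm_eq_abs, abs_sq]
    refine (frobenius_norm_sub_one_le hP.posSemidef).trans ?_
    rw [hPP]
    exact norm_mul_star_sub_one_le_of_mem_skewAdjoint (skewAdjoint.mem_iff.mpr hS) T ht1.le
  obtain ⟨hM, hPM⟩ := norm_inv_smul_le_and_smul_inv_smul_eq hC hP1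
  refine ⟨(t ^ 2)⁻¹ • (P - 1), Q * R₀, ?_, hM.trans (lt_add_one C).le, mul_mem hQ hR₀, ?_⟩
  · exact ((Matrix.isHermitian_iff_isSymm.mp hP.isHermitian).sub Matrix.isSymm_one).smul _
  · rw [hPM, add_sub_cancel, hF, mul_assoc]

lemma fnorm_eq_frobenius_norm (A : Matrix (Fin 3) (Fin 3) ℝ) : fnorm A = ‖A‖ := by
  simp only [frobenius_norm_eq_sqrt, Real.norm_eq_abs, sq_abs, fnorm]

lemma idm_eq_one : (idm : M3) = (1 : Matrix (Fin 3) (Fin 3) ℝ) := by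
  ext i j
  simp only [idm, Matrix.one_apply]

lemma mem_SO3_iff {R : Matrix (Fin 3) (Fin 3) ℝ} :
    (R : M3) ∈ SO3 ↔ R ∈ Matrix.specialOrthogonalGroup (Fin 3) ℝ := by
  rw [Matrix.mem_specialOrthogonalGroup_iff, Matrix.mem_orthogonalGroup_iff']
  change (mmul (transp R) R = idm ∧ R.det = 1) ↔ _
  rw [idm_eq_one]
  rfl

end SymmetricRotationFactorization

/-- For `S` skew, `T` arbitrary and `R₀ ∈ SO(3)`, for small `t` one can write
`(Id + tS + t²T) R₀ = (Id + t² M(t)) R(t)` with `M(t)` symmetric and bounded and `R(t) ∈ SO(3)`. -/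
theorem stmt4 (S T : M3) (hS : ∀ i j, S i j = - S j i) (R0 : M3) (hR0 : R0 ∈ SO3) :
    ∃ ε > (0 : ℝ), ∃ C > (0 : ℝ), ∀ t : ℝ, |t| < ε →
      ∃ M R : M3, SymM M ∧ fnorm M ≤ C ∧ R ∈ SO3 ∧
        mmul (idm + t • S + t ^ 2 • T) R0 = mmul (idm + t ^ 2 • M) R := by
  obtain ⟨ε, hε, C, hC, h⟩ := stmt4_general (funext₂ fun i j => hS j i) T (mem_SO3_iff.mp hR0)
  refine ⟨ε, hε, C, hC, fun t ht => ?_⟩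
  obtain ⟨M, R, hM, hMC, hR, hF⟩ := h t ht
  exact ⟨M, R, fun i j => hM.apply j i, (fnorm_eq_frobenius_norm M).trans_le hMC,
    mem_SO3_iff.mpr hR, idm_eq_one ▸ hF⟩
end
end

section
/- Suppose that R_{1212} ≡ R_{1213} ≡ R_{1223} ≡ 0 on Ω and that sym((∇y0)ᵀ ∇d0) + (∇b0)ᵀ ∇b0 ≡ 0 on Ω. Then also R_{1313} ≡ R_{1323} ≡ R_{2323} ≡ 0 on Ω; that is, all six independent components R_{1212}, R_{1213}, R_{1223}, R_{1313}, R_{1323}, R_{2323} of the Riemann curvature tensor of G vanish identically, so G is a flat metric. -/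
noncomputable section

open scoped Topology ENNReal
open Filter MeasureTheory

/-!
Consider the formal map `u = y₀ + x₃ b₀ + x₃² d₀ / 2 + x₃³ e / 6` into `ℝ³`. The relations
`Q₀ᵀ Q₀ = G`, (sym0) and the definition of `d₀` say that `(∇u)ᵀ ∇u = G + O(x₃²)`. The vanishing of
`sym((∇y₀)ᵀ ∇d₀) + (∇b₀)ᵀ ∇b₀` is the in-plane part of the `x₃²`-coefficient; its remaining entries
form an invertible linear system for `e`. With `e` so chosen, `G` has at `x₃ = 0` the same second
order jet as the pulled back Euclidean metric `(∇u)ᵀ ∇u`, and the curvature depends only on that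
jet.
-/

open scoped Matrix

section Matrix

variable {n R : Type*} [Fintype n] [CommRing R]

theorem inv_mul_transpose_mulVec_vecMul [DecidableEq n] {P : Matrix n n R} (hP : IsUnit P.det)
    (v : n → R) : ((P * Pᵀ)⁻¹ *ᵥ (P *ᵥ v)) ᵥ* P = v := by
  rw [← Matrix.mulVec_transpose, Matrix.mulVec_mulVec, Matrix.mulVec_mulVec, Matrix.mul_inv_rev,
    ← Matrix.mul_assoc, Matrix.mul_nonsing_inv _ (by rwa [Matrix.det_transpose]), Matrix.one_mul,
    Matrix.nonsing_inv_mul _ hP, Matrix.one_mulVec]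

theorem sum_mul_transpose_apply_mul_mul (P : Matrix n n R) (v w : n → R) :
    ∑ i, ∑ j, (P * Pᵀ) i j * (v i * w j) = (v ᵥ* P) ⬝ᵥ (w ᵥ* P) := by
  rw [← Matrix.mulVec_transpose P w, ← Matrix.dotProduct_mulVec, Matrix.mulVec_mulVec]
  simp only [dotProduct, Matrix.mulVec, Finset.mul_sum]
  exact Finset.sum_congr rfl fun i _ => Finset.sum_congr rfl fun j _ => by ring

end Matrix

section Calculus

variable {E F : Type*} [NormedAddCommGroup E] [NormedSpace ℝ E] [NormedAddCommGroup F]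
  [NormedSpace ℝ F]

theorem fderiv_fderiv_apply_comm {f : E → F} {x : E} (hf : ContDiffAt ℝ 2 f x) (v w : E) :
    fderiv ℝ (fun y => fderiv ℝ f y w) x v = fderiv ℝ (fun y => fderiv ℝ f y v) x w := by
  have hf' : DifferentiableAt ℝ (fderiv ℝ f) x :=
    (hf.fderiv_right (m := 1) (by norm_num)).differentiableAt one_ne_zero
  have hsnd (a b : E) :
      fderiv ℝ (fun y => fderiv ℝ f y a) x b = fderiv ℝ (fderiv ℝ f) x b a := by
    simp [fderiv_clm_apply hf' (differentiableAt_const a)]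
  rw [hsnd, hsnd]
  exact hf.isSymmSndFDerivAt (by simp) v w

theorem fderiv_dotProduct_apply {ι : Type*} [Fintype ι] {f g : E → ι → ℝ} {x : E}
    (hf : DifferentiableAt ℝ f x) (hg : DifferentiableAt ℝ g x) (v : E) :
    fderiv ℝ (fun y => f y ⬝ᵥ g y) x v = fderiv ℝ f x v ⬝ᵥ g x + f x ⬝ᵥ fderiv ℝ g x v := by
  have h := ContinuousLinearMap.hasFDerivAt_of_bilinear
    (dotProductBilin ℝ ℝ : (ι → ℝ) →ₗ[ℝ] (ι → ℝ) →ₗ[ℝ] ℝ).toContinuousBilinearMap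
    hf.hasFDerivAt hg.hasFDerivAt
  simpa [add_comm] using congrArg (· v) h.fderiv

end Calculus

theorem dot3_comm (u v : V3) : dot3 u v = dot3 v u :=
  dotProduct_comm u v

theorem differentiableAt_dot3 {E : Type*} [NormedAddCommGroup E] [NormedSpace ℝ E] {f g : E → V3}
    {x : E} (hf : DifferentiableAt ℝ f x) (hg : DifferentiableAt ℝ g x) :
    DifferentiableAt ℝ (fun y => dot3 (f y) (g y)) x := by
  unfold dot3
  fun_prop

theorem pd2_dot3 {f g : E2 → V3} {x : E2} (hf : DifferentiableAt ℝ f x)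
    (hg : DifferentiableAt ℝ g x) (i : Fin 2) :
    pd2 i (fun y => dot3 (f y) (g y)) x = dot3 (pdv i f x) (g x) + dot3 (f x) (pdv i g x) :=
  fderiv_dotProduct_apply hf hg _

theorem pd2_add {f g : E2 → ℝ} {x : E2} (hf : DifferentiableAt ℝ f x)
    (hg : DifferentiableAt ℝ g x) (i : Fin 2) :
    pd2 i (fun y => f y + g y) x = pd2 i f x + pd2 i g x := by
  rw [pd2, fderiv_fun_add hf hg]
  rfl

theorem pd2_congr {f g : E2 → ℝ} {x : E2} (h : f =ᶠ[𝓝 x] g) (i : Fin 2) :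
    pd2 i f x = pd2 i g x := by
  rw [pd2, pd2, h.fderiv_eq]

theorem pd3_castSucc (i : Fin 2) (f : E2 → ℝ) : pd3 i.castSucc f = pd2 i f :=
  funext fun _ => dif_pos i.isLt

theorem pd3_last (f : E2 → ℝ) : pd3 (Fin.last 2) f = 0 :=
  funext fun _ => dif_neg (lt_irrefl 2)

/-- The derivatives `q i = ∂ᵢu` and `D k i = ∂ₖ∂ᵢu` at `x` of a map `u` into `ℝ³` pulling the
Euclidean metric back to `G` up to first order at `x`. Here `x` is a point of the plane `x₃ = 0`,
and derivatives of `G` in `x₃` count as `0`. -/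
structure IsIsometricJetAt (G : E2 → M3) (x : E2) (q : Fin 3 → V3) (D : Fin 3 → Fin 3 → V3) :
    Prop where
  det_ne_zero : (Matrix.of q).det ≠ 0
  dot3_eq : ∀ i j, dot3 (q i) (q j) = G x i j
  symm : ∀ k l, D k l = D l k
  pd3_eq : ∀ k i j, pd3 k (fun y => G y i j) x = dot3 (D k i) (q j) + dot3 (q i) (D k j)

namespace IsIsometricJetAt

variable {G : E2 → M3} {x : E2} {q : Fin 3 → V3} {D : Fin 3 → Fin 3 → V3}

/-- The Gauss formula `∑ₙ Γⁿₖₗ ∂ₙu = ∂ₖ∂ₗu`, without second fundamental form as `q` spans `ℝ³`. -/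
theorem Gamma_vecMul (h : IsIsometricJetAt G x q D) (k l : Fin 3) :
    (fun n => Gamma G n k l x) ᵥ* Matrix.of q = D k l := by
  have hkoszul (s : Fin 3) : pd3 k (fun y => G y s l) x + pd3 l (fun y => G y s k) x
      - pd3 s (fun y => G y k l) x = 2 * dot3 (q s) (D k l) := by
    rw [h.pd3_eq, h.pd3_eq, h.pd3_eq, h.symm s k, h.symm s l, h.symm l k, dot3_comm (q k),
      dot3_comm (D k s)]
    ring
  have hgram : Matrix.of (G x) = Matrix.of q * (Matrix.of q)ᵀ :=
    Matrix.ext fun i j => (h.dot3_eq i j).symm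
  have hpair : Matrix.of q *ᵥ D k l = fun s => dot3 (q s) (D k l) := rfl
  have hGamma : (fun n => Gamma G n k l x) =
      (Matrix.of q * (Matrix.of q)ᵀ)⁻¹ *ᵥ (Matrix.of q *ᵥ D k l) := by
    rw [hpair]
    funext n
    simp only [Gamma, hkoszul, minv, hgram, Matrix.mulVec, dotProduct, Finset.mul_sum]
    exact Finset.sum_congr rfl fun s _ => by ring
  rw [hGamma, inv_mul_transpose_mulVec_vecMul h.det_ne_zero.isUnit]

theorem sum_mul_Gamma_mul_Gamma (h : IsIsometricJetAt G x q D) (k l i m : Fin 3) :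
    ∑ n, ∑ p, G x n p * (Gamma G n k l x * Gamma G p i m x) = dot3 (D k l) (D i m) := by
  have hsum := sum_mul_transpose_apply_mul_mul (Matrix.of q) (fun n => Gamma G n k l x)
    fun p => Gamma G p i m x
  rw [h.Gamma_vecMul, h.Gamma_vecMul] at hsum
  simp only [← h.dot3_eq]
  exact hsum

/-- `T k l m` stands for the third derivative `∂ₖ∂ₗ∂ₘu`. -/
theorem Riem_eq_zero (h : IsIsometricJetAt G x q D) {T : Fin 3 → Fin 3 → Fin 3 → V3}
    (hT_left : ∀ k l m, T k l m = T l k m) (hT_right : ∀ k l m, T k l m = T k m l)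
    (hddG : ∀ k l i j, pd3 k (pd3 l fun y => G y i j) x =
      dot3 (T k l i) (q j) + dot3 (D l i) (D k j) + (dot3 (D k i) (D l j) + dot3 (q i) (T k l j)))
    (i k l m : Fin 3) : Riem G i k l m x = 0 := by
  simp only [Riem, mul_sub, Finset.sum_sub_distrib, h.sum_mul_Gamma_mul_Gamma, hddG]
  -- The terms in `T` cancel by symmetry, those in `D` against the Christoffel terms.
  rw [hT_right i l k, hT_right i m k, hT_right i m l, hT_right k m l, hT_right k m i,
    hT_right k l i, hT_left k i, hT_left k i, h.symm l i, h.symm l k, h.symm m k, h.symm m i,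
    h.symm k i, dot3_comm (D k m), dot3_comm (D i m)]
  ring

end IsIsometricJetAt

/-- The partial derivatives `∂₁, ∂₂, ∂₃` of a formal series `∑ₙ uₙ x₃ⁿ / n!` with coefficients
`uₙ : ℝ² → ℝ³`, encoded by the sequence of its coefficients, so that `∂₃` is the shift. -/
def jetPd (k : Fin 3) (u : ℕ → E2 → V3) (n : ℕ) : E2 → V3 :=
  if h : (k : ℕ) < 2 then pdv ⟨(k : ℕ), h⟩ (u n) else u (n + 1)

/-- Joint `Cʳ` regularity at `x` of a formal series `∑ₙ uₙ x₃ⁿ / n!`: the coefficient `uₙ` uses up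
`n` of the `r` available derivatives. -/
def JetContDiffAt (r : ℕ) (u : ℕ → E2 → V3) (x : E2) : Prop :=
  ∀ n m : ℕ, n + m ≤ r → ContDiffAt ℝ m (u n) x

theorem jetPd_castSucc (i : Fin 2) (u : ℕ → E2 → V3) (n : ℕ) :
    jetPd i.castSucc u n = pdv i (u n) :=
  dif_pos i.isLt

theorem jetPd_last (u : ℕ → E2 → V3) (n : ℕ) : jetPd (Fin.last 2) u n = u (n + 1) :=
  dif_neg (lt_irrefl 2)

theorem jetPd_congr {u v : ℕ → E2 → V3} {x : E2} {n : ℕ} (h : u n =ᶠ[𝓝 x] v n)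
    (h' : u (n + 1) x = v (n + 1) x) (k : Fin 3) : jetPd k u n x = jetPd k v n x := by
  cases k using Fin.lastCases with
  | last => simpa only [jetPd_last] using h'
  | cast i => simp only [jetPd_castSucc, pdv, h.fderiv_eq]

namespace JetContDiffAt

variable {r n : ℕ} {u : ℕ → E2 → V3} {x : E2}

protected theorem jetPd (h : JetContDiffAt (r + 1) u x) (k : Fin 3) :
    JetContDiffAt r (jetPd k u) x := by
  intro n m hnm
  cases k using Fin.lastCases with
  | last =>
    rw [jetPd_last]
    exact h (n + 1) m (by lia)
  | cast i =>
    rw [jetPd_castSucc]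
    exact ((h n (m + 1) (by lia)).fderiv_right (by norm_cast)).clm_apply contDiffAt_const

theorem differentiableAt (h : JetContDiffAt r u x) (hn : n + 1 ≤ r) : DifferentiableAt ℝ (u n) x :=
  (h n 1 hn).differentiableAt (by norm_num)

theorem jetPd_comm (h : JetContDiffAt r u x) (hn : n + 2 ≤ r) (k l : Fin 3) :
    jetPd k (jetPd l u) n x = jetPd l (jetPd k u) n x := by
  cases k using Fin.lastCases with
  | last => cases l using Fin.lastCases <;> simp only [jetPd_last, jetPd_castSucc]
  | cast i =>
    cases l using Fin.lastCases with
    | last => simp only [jetPd_last, jetPd_castSucc]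
    | cast j =>
      simp only [jetPd_castSucc]
      exact fderiv_fderiv_apply_comm (h n 2 hn) _ _

end JetContDiffAt

/-- The formal map `u = ∑ₙ uₙ x₃ⁿ / n!` is an isometric immersion of the `x₃`-independent metric `G`
over the open set `Ω` up to an error of order `x₃²`: `⟨∂ᵢu, ∂ⱼu⟩ = Gᵢⱼ` and `∂₃⟨∂ᵢu, ∂ⱼu⟩ = 0` at
`x₃ = 0`. -/
structure IsFirstOrderIsometricOn (u : ℕ → E2 → V3) (G : E2 → M3) (Ω : Set E2) : Prop where
  isOpen : IsOpen Ω
  jetContDiffAt : ∀ x ∈ Ω, JetContDiffAt 3 u x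
  det_ne_zero : ∀ x ∈ Ω, (Matrix.of fun i => jetPd i u 0 x).det ≠ 0
  dot3_eq : ∀ x ∈ Ω, ∀ i j, dot3 (jetPd i u 0 x) (jetPd j u 0 x) = G x i j
  dot3_add_dot3_eq_zero : ∀ x ∈ Ω, ∀ i j,
    dot3 (jetPd i u 1 x) (jetPd j u 0 x) + dot3 (jetPd i u 0 x) (jetPd j u 1 x) = 0

/-- The second order condition `∂₃²⟨∂ᵢu, ∂ⱼu⟩ = 0` at the point `(x, 0)` for the formal map
`u = ∑ₙ uₙ x₃ⁿ / n!` to pull the Euclidean metric back to an `x₃`-independent one. -/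
def IsSecondOrderIsometricAt (u : ℕ → E2 → V3) (x : E2) : Prop :=
  ∀ i j, dot3 (jetPd i u 2 x) (jetPd j u 0 x) + 2 * dot3 (jetPd i u 1 x) (jetPd j u 1 x) +
    dot3 (jetPd i u 0 x) (jetPd j u 2 x) = 0

namespace IsFirstOrderIsometricOn

variable {u : ℕ → E2 → V3} {G : E2 → M3} {Ω : Set E2} {x : E2}

theorem pd3_eq (h : IsFirstOrderIsometricOn u G Ω) (hx : x ∈ Ω) (k i j : Fin 3) :
    pd3 k (fun y => G y i j) x = dot3 (jetPd k (jetPd i u) 0 x) (jetPd j u 0 x) +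
      dot3 (jetPd i u 0 x) (jetPd k (jetPd j u) 0 x) := by
  cases k using Fin.lastCases with
  | last => simp only [pd3_last, jetPd_last, zero_add, h.dot3_add_dot3_eq_zero x hx, Pi.zero_apply]
  | cast k =>
    have hdiff (i : Fin 3) : DifferentiableAt ℝ (jetPd i u 0) x :=
      ((h.jetContDiffAt x hx).jetPd i).differentiableAt (by norm_num)
    have hG : (fun y => G y i j) =ᶠ[𝓝 x] fun y => dot3 (jetPd i u 0 y) (jetPd j u 0 y) := by
      filter_upwards [h.isOpen.mem_nhds hx] with y hy using (h.dot3_eq y hy i j).symm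
    rw [pd3_castSucc, pd2_congr hG, pd2_dot3 (hdiff i) (hdiff j), jetPd_castSucc, jetPd_castSucc]

theorem isIsometricJetAt (h : IsFirstOrderIsometricOn u G Ω) (hx : x ∈ Ω) :
    IsIsometricJetAt G x (fun i => jetPd i u 0 x) fun k l => jetPd k (jetPd l u) 0 x where
  det_ne_zero := h.det_ne_zero x hx
  dot3_eq := h.dot3_eq x hx
  symm := (h.jetContDiffAt x hx).jetPd_comm (by norm_num)
  pd3_eq := h.pd3_eq hx

theorem jetPd_jetPd_jetPd_left_comm (h : IsFirstOrderIsometricOn u G Ω) (hx : x ∈ Ω)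
    (k l m : Fin 3) :
    jetPd k (jetPd l (jetPd m u)) 0 x = jetPd l (jetPd k (jetPd m u)) 0 x :=
  ((h.jetContDiffAt x hx).jetPd m).jetPd_comm le_rfl k l

theorem jetPd_jetPd_jetPd_right_comm (h : IsFirstOrderIsometricOn u G Ω) (hx : x ∈ Ω)
    (k l m : Fin 3) :
    jetPd k (jetPd l (jetPd m u)) 0 x = jetPd k (jetPd m (jetPd l u)) 0 x := by
  refine jetPd_congr ?_ ((h.jetContDiffAt x hx).jetPd_comm le_rfl l m) k
  filter_upwards [h.isOpen.mem_nhds hx] with y hy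
  exact (h.jetContDiffAt y hy).jetPd_comm (by norm_num) l m

theorem pd2_dot3_add_dot3 (h : IsFirstOrderIsometricOn u G Ω) (hx : x ∈ Ω) (k : Fin 2)
    (l i j : Fin 3) :
    pd2 k (fun y => dot3 (jetPd l (jetPd i u) 0 y) (jetPd j u 0 y) +
        dot3 (jetPd i u 0 y) (jetPd l (jetPd j u) 0 y)) x =
      dot3 (jetPd k.castSucc (jetPd l (jetPd i u)) 0 x) (jetPd j u 0 x) +
        dot3 (jetPd l (jetPd i u) 0 x) (jetPd k.castSucc (jetPd j u) 0 x) +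
      (dot3 (jetPd k.castSucc (jetPd i u) 0 x) (jetPd l (jetPd j u) 0 x) +
        dot3 (jetPd i u 0 x) (jetPd k.castSucc (jetPd l (jetPd j u)) 0 x)) := by
  have hq (i : Fin 3) : DifferentiableAt ℝ (jetPd i u 0) x :=
    ((h.jetContDiffAt x hx).jetPd i).differentiableAt (by norm_num)
  have hD (i : Fin 3) : DifferentiableAt ℝ (jetPd l (jetPd i u) 0) x :=
    (((h.jetContDiffAt x hx).jetPd i).jetPd l).differentiableAt le_rfl
  rw [pd2_add (differentiableAt_dot3 (hD i) (hq j)) (differentiableAt_dot3 (hq i) (hD j)),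
    pd2_dot3 (hD i) (hq j), pd2_dot3 (hq i) (hD j)]
  simp only [jetPd_castSucc]

theorem pd3_pd3_eq (h : IsFirstOrderIsometricOn u G Ω) (hx : x ∈ Ω)
    (hsecond : IsSecondOrderIsometricAt u x) (k l i j : Fin 3) :
    pd3 k (pd3 l fun y => G y i j) x =
      dot3 (jetPd k (jetPd l (jetPd i u)) 0 x) (jetPd j u 0 x) +
        dot3 (jetPd l (jetPd i u) 0 x) (jetPd k (jetPd j u) 0 x) +
      (dot3 (jetPd k (jetPd i u) 0 x) (jetPd l (jetPd j u) 0 x) +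
        dot3 (jetPd i u 0 x) (jetPd k (jetPd l (jetPd j u)) 0 x)) := by
  cases k using Fin.lastCases with
  | cast k =>
    rw [← h.pd2_dot3_add_dot3 hx, pd3_castSucc]
    refine pd2_congr ?_ k
    filter_upwards [h.isOpen.mem_nhds hx] with y hy using h.pd3_eq hy l i j
  | last =>
    cases l using Fin.lastCases with
    | last =>
      simp only [pd3_last, jetPd_last, Pi.zero_apply]
      linarith [hsecond i j]
    | cast l =>
      have hzero : (fun y => dot3 (jetPd (Fin.last 2) (jetPd i u) 0 y) (jetPd j u 0 y) +
          dot3 (jetPd i u 0 y) (jetPd (Fin.last 2) (jetPd j u) 0 y)) =ᶠ[𝓝 x] fun _ => 0 := by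
        filter_upwards [h.isOpen.mem_nhds hx] with y hy
        simpa only [jetPd_last] using h.dot3_add_dot3_eq_zero y hy i j
      have hderiv := h.pd2_dot3_add_dot3 hx l (Fin.last 2) i j
      have hconst : pd2 l (fun _ => 0) x = 0 := by simp [pd2]
      rw [pd2_congr hzero, hconst] at hderiv
      rw [pd3_last, Pi.zero_apply, h.jetPd_jetPd_jetPd_left_comm hx _ l.castSucc,
        h.jetPd_jetPd_jetPd_left_comm hx _ l.castSucc]
      linarith

theorem Riem_eq_zero (h : IsFirstOrderIsometricOn u G Ω) (hx : x ∈ Ω)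
    (hsecond : IsSecondOrderIsometricAt u x) (i k l m : Fin 3) : Riem G i k l m x = 0 :=
  (h.isIsometricJetAt hx).Riem_eq_zero (h.jetPd_jetPd_jetPd_left_comm hx)
    (h.jetPd_jetPd_jetPd_right_comm hx) (h.pd3_pd3_eq hx hsecond) i k l m

end IsFirstOrderIsometricOn

theorem exists_forall_dot3_eq {q : Fin 3 → V3} (hq : (Matrix.of q).det ≠ 0) (r : Fin 3 → ℝ) :
    ∃ e, ∀ i, dot3 (q i) e = r i := by
  have hsurj : Function.Surjective (Matrix.of q).mulVec :=
    Matrix.mulVec_surjective_iff_isUnit.2 ((Matrix.isUnit_iff_isUnit_det _).2 hq.isUnit)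
  exact (hsurj r).imp fun e he => congrFun he

/-- The Taylor jet of `y₀ + x₃ b₀ + x₃² d₀ / 2 + x₃³ e / 6`, with `e` a constant vector. -/
def cubicJet (y0 b0 d0 : E2 → V3) (e : V3) : ℕ → E2 → V3
  | 0 => y0
  | 1 => b0
  | 2 => d0
  | 3 => fun _ => e
  | _ => 0

section CubicJet

variable {y0 b0 d0 : E2 → V3} {x : E2}

theorem jetContDiffAt_cubicJet (hy0 : ContDiffAt ℝ 3 y0 x) (hb0 : ContDiffAt ℝ 2 b0 x)
    (hd0 : ContDiffAt ℝ 1 d0 x) (e : V3) : JetContDiffAt 3 (cubicJet y0 b0 d0 e) x := by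
  rintro (_ | _ | _ | _ | n) m hm
  · exact hy0.of_le (by norm_cast; lia)
  · exact hb0.of_le (by norm_cast; lia)
  · exact hd0.of_le (by norm_cast; lia)
  · exact contDiffAt_const
  · exact contDiffAt_const

theorem Qcol_castSucc (i : Fin 2) : Qcol y0 b0 x i.castSucc = pdv i y0 x := by
  fin_cases i <;> rfl

theorem jetPd_cubicJet_zero (e : V3) (i : Fin 3) :
    jetPd i (cubicJet y0 b0 d0 e) 0 x = Qcol y0 b0 x i := by
  fin_cases i <;> rfl

theorem isFirstOrderIsometricOn_cubicJet {G : E2 → M3} {Ω : Set E2} (hΩ : IsOpen Ω)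
    (hy0 : ContDiffOn ℝ 3 y0 Ω) (hb0 : ContDiffOn ℝ 2 b0 Ω) (hd0 : ContDiffOn ℝ 1 d0 Ω)
    (hQ0 : ∀ x ∈ Ω, ∀ i j : Fin 3, dot3 (Qcol y0 b0 x i) (Qcol y0 b0 x j) = G x i j)
    (hQdet : ∀ x ∈ Ω, Qdet y0 b0 x ≠ 0)
    (hsym0 : ∀ x ∈ Ω, ∀ i j : Fin 2,
      dot3 (pdv i y0 x) (pdv j b0 x) + dot3 (pdv j y0 x) (pdv i b0 x) = 0)
    (hd0_eq : ∀ x ∈ Ω,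
      (∀ i : Fin 2, dot3 (Qcol y0 b0 x i.castSucc) (d0 x) = - dot3 (pdv i b0 x) (b0 x)) ∧
      dot3 (Qcol y0 b0 x 2) (d0 x) = 0) (e : V3) :
    IsFirstOrderIsometricOn (cubicJet y0 b0 d0 e) G Ω where
  isOpen := hΩ
  jetContDiffAt x hx := jetContDiffAt_cubicJet (hy0.contDiffAt (hΩ.mem_nhds hx))
    (hb0.contDiffAt (hΩ.mem_nhds hx)) (hd0.contDiffAt (hΩ.mem_nhds hx)) e
  det_ne_zero x hx := by
    simp only [jetPd_cubicJet_zero]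
    rw [← Matrix.det_transpose]
    exact hQdet x hx
  dot3_eq x hx i j := by
    simp only [jetPd_cubicJet_zero, hQ0 x hx]
  dot3_add_dot3_eq_zero x hx i j := by
    have htangent (i : Fin 2) : dot3 (pdv i y0 x) (d0 x) = - dot3 (pdv i b0 x) (b0 x) := by
      rw [← (hd0_eq x hx).1, Qcol_castSucc]
    have hnormal : dot3 (b0 x) (d0 x) = 0 := (hd0_eq x hx).2
    cases i using Fin.lastCases <;> cases j using Fin.lastCases <;>
      simp only [jetPd_last, jetPd_castSucc, cubicJet]
    case last.last => linarith [dot3_comm (d0 x) (b0 x)]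
    case last.cast j =>
      linarith [htangent j, dot3_comm (b0 x) (pdv j b0 x), dot3_comm (d0 x) (pdv j y0 x)]
    case cast.last i => linarith [htangent i]
    case cast.cast i j =>
      linarith [hsym0 x hx i j, dot3_comm (pdv i b0 x) (pdv j y0 x)]

theorem exists_isSecondOrderIsometricAt_cubicJet (hQdet : Qdet y0 b0 x ≠ 0)
    (hsecond : ∀ i j : Fin 2,
      (dot3 (pdv i y0 x) (pdv j d0 x) + dot3 (pdv j y0 x) (pdv i d0 x)) / 2 +
        dot3 (pdv i b0 x) (pdv j b0 x) = 0) :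
    ∃ e, IsSecondOrderIsometricAt (cubicJet y0 b0 d0 e) x := by
  obtain ⟨e, he⟩ := exists_forall_dot3_eq (q := Qcol y0 b0 x)
    (by rwa [← Matrix.det_transpose]) (Fin.lastCases (-dot3 (d0 x) (d0 x))
      fun i => -(dot3 (pdv i d0 x) (b0 x) + 2 * dot3 (pdv i b0 x) (d0 x)))
  have hnormal : dot3 (b0 x) e = -dot3 (d0 x) (d0 x) := he (Fin.last 2)
  have htangent (i : Fin 2) : dot3 (pdv i y0 x) e =
      -(dot3 (pdv i d0 x) (b0 x) + 2 * dot3 (pdv i b0 x) (d0 x)) := by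
    simpa only [Qcol_castSucc, Fin.lastCases_castSucc] using he i.castSucc
  refine ⟨e, fun i j => ?_⟩
  cases i using Fin.lastCases <;> cases j using Fin.lastCases <;>
    simp only [jetPd_last, jetPd_castSucc, cubicJet]
  case last.last => linarith [dot3_comm e (b0 x)]
  case last.cast j =>
    linarith [htangent j, dot3_comm e (pdv j y0 x), dot3_comm (d0 x) (pdv j b0 x),
      dot3_comm (b0 x) (pdv j d0 x)]
  case cast.last i => linarith [htangent i]
  case cast.cast i j =>
    linarith [hsecond i j, dot3_comm (pdv i d0 x) (pdv j y0 x)]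

end CubicJet

theorem stmt6_general {Ω : Set E2} (hΩ : IsOpen Ω) {G : E2 → M3} {y0 b0 d0 : E2 → V3}
    (hy0 : ContDiffOn ℝ 3 y0 Ω) (hb0 : ContDiffOn ℝ 2 b0 Ω) (hd0sm : ContDiffOn ℝ 1 d0 Ω)
    (hQ0 : ∀ x ∈ Ω, ∀ i j : Fin 3, dot3 (Qcol y0 b0 x i) (Qcol y0 b0 x j) = G x i j)
    (hQdet : ∀ x ∈ Ω, Qdet y0 b0 x ≠ 0)
    (hsym0 : ∀ x ∈ Ω, ∀ i j : Fin 2,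
      dot3 (pdv i y0 x) (pdv j b0 x) + dot3 (pdv j y0 x) (pdv i b0 x) = 0)
    (hd0 : ∀ x ∈ Ω,
      (∀ i : Fin 2, dot3 (Qcol y0 b0 x i.castSucc) (d0 x) = - dot3 (pdv i b0 x) (b0 x)) ∧
      dot3 (Qcol y0 b0 x 2) (d0 x) = 0)
    (hnowe : ∀ x ∈ Ω, ∀ i j : Fin 2,
      (dot3 (pdv i y0 x) (pdv j d0 x) + dot3 (pdv j y0 x) (pdv i d0 x)) / 2 +
        dot3 (pdv i b0 x) (pdv j b0 x) = 0) :
    ∀ x ∈ Ω, ∀ i k l m, Riem G i k l m x = 0 := by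
  intro x hx
  obtain ⟨e, he⟩ := exists_isSecondOrderIsometricAt_cubicJet (hQdet x hx) (hnowe x hx)
  exact (isFirstOrderIsometricOn_cubicJet hΩ hy0 hb0 hd0sm hQ0 hQdet hsym0 hd0 e).Riem_eq_zero hx he

/-- If `R₁₂₁₂ ≡ R₁₂₁₃ ≡ R₁₂₂₃ ≡ 0` and
`sym((∇y₀)ᵀ∇d₀) + (∇b₀)ᵀ∇b₀ ≡ 0` on `Ω`, then all six independent Riemann curvatures of `G`
vanish identically on `Ω`, i.e. `G` is flat. -/
theorem stmt6
    (Ω : Set E2) (hΩo : IsOpen Ω) (hΩb : Bornology.IsBounded Ω)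
    (hΩsc : SimplyConnectedSpace ↥Ω)
    (G : E2 → M3) (hGsm : ContDiffOn ℝ (⊤ : ℕ∞) G (closure Ω))
    (hGsym : ∀ x ∈ closure Ω, SymM (G x)) (hGpos : ∀ x ∈ closure Ω, PosDefM (G x))
    (y0 : E2 → V3) (hy0sm : ContDiffOn ℝ (⊤ : ℕ∞) y0 (closure Ω))
    (himm : ∀ x ∈ Ω, ∀ i j : Fin 2,
      dot3 (pdv i y0 x) (pdv j y0 x) = G x i.castSucc j.castSucc)
    (b0 : E2 → V3) (hb0sm : ContDiffOn ℝ (⊤ : ℕ∞) b0 (closure Ω))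
    (hQ0 : ∀ x ∈ Ω, ∀ i j : Fin 3,
      dot3 (Qcol y0 b0 x i) (Qcol y0 b0 x j) = G x i j)
    (hQdet : ∀ x ∈ Ω, 0 < Qdet y0 b0 x)
    (hsym0 : ∀ x ∈ Ω, ∀ i j : Fin 2,
      dot3 (pdv i y0 x) (pdv j b0 x) + dot3 (pdv j y0 x) (pdv i b0 x) = 0)
    (d0 : E2 → V3) (hd0sm : ContDiffOn ℝ (⊤ : ℕ∞) d0 (closure Ω))
    (hd0 : ∀ x ∈ Ω,
      (∀ i : Fin 2, dot3 (Qcol y0 b0 x i.castSucc) (d0 x) = - dot3 (pdv i b0 x) (b0 x)) ∧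
      dot3 (Qcol y0 b0 x 2) (d0 x) = 0)
    (hvanish : ∀ x ∈ Ω,
      Riem G 0 1 0 1 x = 0 ∧ Riem G 0 1 0 2 x = 0 ∧ Riem G 0 1 1 2 x = 0)
    (hnowe : ∀ x ∈ Ω, ∀ i j : Fin 2,
      (dot3 (pdv i y0 x) (pdv j d0 x) + dot3 (pdv j y0 x) (pdv i d0 x)) / 2 +
        dot3 (pdv i b0 x) (pdv j b0 x) = 0) :
    ∀ x ∈ Ω,
      Riem G 0 1 0 1 x = 0 ∧ Riem G 0 1 0 2 x = 0 ∧ Riem G 0 1 1 2 x = 0 ∧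
      Riem G 0 2 0 2 x = 0 ∧ Riem G 0 2 1 2 x = 0 ∧ Riem G 1 2 1 2 x = 0 := by
  have hsmooth {f : E2 → V3} (hf : ContDiffOn ℝ (⊤ : ℕ∞) f (closure Ω)) (n : ℕ) :
      ContDiffOn ℝ n f Ω :=
    (hf.mono subset_closure).of_le (WithTop.coe_le_coe.2 le_top)
  intro x hx
  have hflat := stmt6_general hΩo (hsmooth hy0sm 3) (hsmooth hb0sm 2) (hsmooth hd0sm 1) hQ0
    (fun z hz => (hQdet z hz).ne') hsym0 hd0 hnowe x hx
  exact ⟨hflat .., hflat .., hflat .., hflat .., hflat .., hflat ..⟩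
end
end
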